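/- Let n ≥ 2. The set { σ_{π(1)}^{(−1)^{π(1)+1}} · σ_{π(2)}^{(−1)^{π(2)+1}} ⋯ σ_{π(n−1)}^{(−1)^{π(n−1)+1}} : π a permutation of {1, …, n−1} } of elements of the braid group B_n has exactly 2^{n−2} elements. -/

import Mathlib

/-!
Write `g k` for the letter `σ_{k+1}^{(-1)^k}` and let `S m` be the set of products of the letters
`g 0, …, g (m-1)` taken in any order, so that the set to be counted is `S (n-1)`
(`range_permutedAlpha`).

In such a product of `g 0, …, g m`, the letter `g m` commutes with every other letter except
`g (m-1)`, hence it can be moved to the end of the word if it comes after `g (m-1)`, and to the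
front otherwise. So `S (m+1) = g m • S m ∪ S m • g m` (`letterProds_succ`), and it remains to see
that this union is disjoint for `m ≥ 1`, which gives `|S (m+1)| = 2 |S m|`, with `|S 1| = 1`.

Disjointness is already visible in the symmetric group, where `g k` becomes the transposition
`(k k+1)` (`braidPerm`): the image of an element of `S m` fixes every point `> m`, and moves `m` if
`m ≥ 1`. If `g m * x = y * g m` with `x, y ∈ S m`, then evaluating both sides at `m + 1` gives
`m` on the left and the image of `m` under `y`, which is not `m`, on the right.
-/

/-- The braid relations on `n` strands, as elements of the free group on
generators indexed by `Fin (n-1)` (generator `i` corresponds to `σ_{i+1}`). -/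
def braidRels (n : ℕ) : Set (FreeGroup (Fin (n - 1))) :=
  {r | ∃ i j : Fin (n - 1), (i : ℕ) + 2 ≤ (j : ℕ) ∧
      r = FreeGroup.of i * FreeGroup.of j * (FreeGroup.of i)⁻¹ * (FreeGroup.of j)⁻¹} ∪
  {r | ∃ i j : Fin (n - 1), (j : ℕ) = (i : ℕ) + 1 ∧
      r = FreeGroup.of i * FreeGroup.of j * FreeGroup.of i *
        (FreeGroup.of j * FreeGroup.of i * FreeGroup.of j)⁻¹}

/-- The braid group on `n` strands, presented by generators `σ_1, …, σ_{n-1}`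
and the braid relations. -/
def BraidGroup (n : ℕ) : Type := PresentedGroup (braidRels n)

instance (n : ℕ) : Group (BraidGroup n) :=
  inferInstanceAs (Group (PresentedGroup (braidRels n)))

/-- The Artin generator `σ_i` of the braid group `B_n`, for `1 ≤ i ≤ n-1`
(junk value `1` outside this range). -/
def braidGen (n i : ℕ) : BraidGroup n :=
  if h : 1 ≤ i ∧ i ≤ n - 1 then PresentedGroup.of ⟨i - 1, by omega⟩ else 1

/-- The braid `α_n = σ_1 σ_2⁻¹ σ_3 σ_4⁻¹ ⋯ σ_{n-1}^{(-1)^n}`. -/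
def braidAlpha (n : ℕ) : BraidGroup n :=
  ((List.range (n - 1)).map fun k => braidGen n (k + 1) ^ ((-1 : ℤ) ^ k)).prod

/-- The band generator `(t s)` (for `1 ≤ s < t ≤ n`):
`σ_{t-1} σ_{t-2} ⋯ σ_s ⋅ σ_{s+1}⁻¹ σ_{s+2}⁻¹ ⋯ σ_{t-1}⁻¹`. -/
def bandGen (n t s : ℕ) : BraidGroup n :=
  (((List.range (t - s)).map fun k => braidGen n (t - 1 - k)).prod) *
  (((List.range (t - 1 - s)).map fun k => (braidGen n (s + 1 + k))⁻¹).prod)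

/-- The descending cycle `(n_1 n_2 … n_m) = (n_1 n_2)(n_2 n_3) ⋯ (n_{m-1} n_m)`
associated to a (strictly decreasing) list `[n_1, n_2, …, n_m]`. -/
def descCycle (n : ℕ) (L : List ℕ) : BraidGroup n :=
  ((L.zip L.tail).map fun p => bandGen n p.1 p.2).prod

/-- The fundamental word `δ = σ_{n-1} σ_{n-2} ⋯ σ_1`. -/
def braidDelta (n : ℕ) : BraidGroup n :=
  ((List.range (n - 1)).map fun k => braidGen n (n - 1 - k)).prod

/-- For a permutation `π` of `{1, …, n-1}` (coded as `Equiv.Perm (Fin (n-1))`,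
position/value `k` corresponding to `k+1`), the braid
`σ_{π(1)}^{(-1)^{π(1)+1}} σ_{π(2)}^{(-1)^{π(2)+1}} ⋯ σ_{π(n-1)}^{(-1)^{π(n-1)+1}}`. -/
def permutedAlpha (n : ℕ) (π : Equiv.Perm (Fin (n - 1))) : BraidGroup n :=
  (List.ofFn fun k : Fin (n - 1) =>
    braidGen n ((π k : ℕ) + 1) ^ ((-1 : ℤ) ^ (π k : ℕ))).prod

/-- The products of the letters `g 0, …, g (m - 1)`, each used exactly once, in any order. -/
def letterProds {G : Type*} [Group G] (g : ℕ → G) (m : ℕ) : Set G :=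
  {x | ∃ L : List ℕ, L.Perm (List.range m) ∧ (L.map g).prod = x}

/-- The top letter can always be moved to one of the two ends of the word. -/
theorem letterProds_succ {G : Type*} [Group G] (g : ℕ → G)
    (hc : ∀ i j, i + 2 ≤ j → Commute (g i) (g j)) (m : ℕ) :
    letterProds g (m + 1) =
      (fun x => g m * x) '' letterProds g m ∪ (fun x => x * g m) '' letterProds g m := by
  ext x
  constructor
  · rintro ⟨L, hL, rfl⟩
    have hmem : m ∈ L := hL.mem_iff.2 (by simp)
    obtain ⟨A, B, rfl⟩ := List.append_of_mem hmem
    have hAB : (A ++ B).Perm (List.range m) := by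
      have h1 : (m :: (A ++ B)).Perm (m :: List.range m) := by
        refine List.perm_middle.symm.trans (hL.trans ?_)
        rw [List.range_succ]
        exact List.perm_append_singleton m (List.range m)
      exact (List.perm_cons m).1 h1
    have hlt : ∀ a, a ∈ A ∨ a ∈ B → a < m := fun a ha => by
      have := (hAB.mem_iff (a := a)).1 (by simpa using ha)
      simpa using this
    have hnd : (A ++ B).Nodup := hAB.nodup_iff.2 List.nodup_range
    -- A block avoiding `m - 1` commutes with the letter `g m`.
    have hcomm : ∀ C : List ℕ, (∀ c ∈ C, c + 2 ≤ m) → Commute (C.map g).prod (g m) := by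
      intro C hC
      refine Commute.list_prod_left _ _ ?_
      intro y hy
      obtain ⟨c, hcC, rfl⟩ := List.mem_map.1 hy
      exact hc c m (hC c hcC)
    by_cases hA : m - 1 ∈ A
    · right
      refine ⟨_, ⟨A ++ B, hAB, rfl⟩, ?_⟩
      have := hcomm B (fun b hb => by
        have h1 := hlt b (Or.inr hb)
        have h2 : b ≠ m - 1 := fun h => List.disjoint_of_nodup_append hnd hA (h ▸ hb)
        omega)
      simp only [List.map_append, List.prod_append, List.map_cons, List.prod_cons, mul_assoc]
      rw [this.eq]
    · left
      refine ⟨_, ⟨A ++ B, hAB, rfl⟩, ?_⟩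
      have := hcomm A (fun a ha => by
        have h1 := hlt a (Or.inl ha)
        have h2 : a ≠ m - 1 := fun h => hA (h ▸ ha)
        omega)
      simp only [List.map_append, List.prod_append, List.map_cons, List.prod_cons, ← mul_assoc]
      rw [this.eq]
  · rintro (⟨_, ⟨L, hL, rfl⟩, rfl⟩ | ⟨_, ⟨L, hL, rfl⟩, rfl⟩)
    · refine ⟨m :: L, ?_, by simp⟩
      rw [List.range_succ]
      exact (hL.cons m).trans (List.perm_append_singleton m (List.range m)).symm
    · refine ⟨L ++ [m], ?_, by simp⟩
      rw [List.range_succ]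
      exact hL.append_right [m]

theorem letterProds_zero {G : Type*} [Group G] (g : ℕ → G) : letterProds g 0 = {1} := by
  ext x
  simp [letterProds, eq_comm]

/-- The image of an element of `letterProds g m` in the permutations of `ℕ` fixes the points above
`m`. -/
theorem letterProds_fix {G : Type*} [Group G] (g : ℕ → G)
    (hc : ∀ i j, i + 2 ≤ j → Commute (g i) (g j)) (φ : G →* Equiv.Perm ℕ) (N : ℕ)
    (hφ : ∀ k < N, φ (g k) = Equiv.swap k (k + 1)) (m : ℕ) (hm : m ≤ N) :
    ∀ x ∈ letterProds g m, ∀ j, m < j → φ x j = j := by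
  induction m with
  | zero =>
    intro x hx j _
    rw [letterProds_zero] at hx
    simp [Set.mem_singleton_iff.1 hx]
  | succ m ih =>
    intro x hx j hj
    have hs : Equiv.swap m (m + 1) j = j :=
      Equiv.swap_apply_of_ne_of_ne (by omega) (by omega)
    rw [letterProds_succ g hc] at hx
    rcases hx with ⟨y, hy, rfl⟩ | ⟨y, hy, rfl⟩ <;>
      simp [hφ m (by omega), hs, ih (by omega) y hy j (by omega)]

theorem letterProds_move {G : Type*} [Group G] (g : ℕ → G)
    (hc : ∀ i j, i + 2 ≤ j → Commute (g i) (g j)) (φ : G →* Equiv.Perm ℕ) (N : ℕ)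
    (hφ : ∀ k < N, φ (g k) = Equiv.swap k (k + 1)) (m : ℕ) (hm : m + 1 ≤ N) :
    ∀ x ∈ letterProds g (m + 1), φ x (m + 1) ≠ m + 1 := by
  intro x hx
  rw [letterProds_succ g hc] at hx
  rcases hx with ⟨y, hy, rfl⟩ | ⟨y, hy, rfl⟩
  all_goals
    have hfix := letterProds_fix g hc φ N hφ m (by omega) y hy (m + 1) (by omega)
    simp only [map_mul, Equiv.Perm.mul_apply, hφ m (by omega)]
  · simp [hfix]
  · rw [Equiv.swap_apply_right]
    intro h
    have := (φ y).injective (h.trans hfix.symm)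
    omega

theorem letterProds_ncard {G : Type*} [Group G] (g : ℕ → G)
    (hc : ∀ i j, i + 2 ≤ j → Commute (g i) (g j)) (φ : G →* Equiv.Perm ℕ) (N : ℕ)
    (hφ : ∀ k < N, φ (g k) = Equiv.swap k (k + 1)) (m : ℕ) (hm : m + 1 ≤ N) :
    (letterProds g (m + 1)).ncard = 2 ^ m := by
  induction m with
  | zero => simp [letterProds_succ g hc, letterProds_zero]
  | succ m ih =>
    have hcard := ih (by omega)
    have hfin : (letterProds g (m + 1)).Finite :=
      Set.finite_of_ncard_ne_zero (by rw [hcard]; positivity)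
    rw [letterProds_succ g hc, Set.ncard_union_eq ?_ (hfin.image _) (hfin.image _),
      Set.ncard_image_of_injective _ (mul_right_injective _),
      Set.ncard_image_of_injective _ (mul_left_injective _), hcard]
    · ring
    · rw [Set.disjoint_left]
      rintro _ ⟨x, hx, rfl⟩ ⟨y, hy, hxy⟩
      have h := congrArg (fun z => φ z (m + 1 + 1)) hxy
      simp only [map_mul, Equiv.Perm.mul_apply, hφ (m + 1) (by omega),
        letterProds_fix g hc φ N hφ (m + 1) (by omega) x hx (m + 1 + 1) (by omega),
        Equiv.swap_apply_right] at h
      exact letterProds_move g hc φ N hφ m (by omega) y hy h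

theorem braidGen_eq_of (n i : ℕ) (h : 1 ≤ i ∧ i ≤ n - 1) :
    braidGen n i = PresentedGroup.of (rels := braidRels n) ⟨i - 1, by omega⟩ :=
  dif_pos h

theorem braidGen_eq_one (n i : ℕ) (h : ¬ (1 ≤ i ∧ i ≤ n - 1)) : braidGen n i = 1 :=
  dif_neg h

theorem braidGen_commute (n i j : ℕ) (hij : i + 2 ≤ j) :
    Commute (braidGen n i) (braidGen n j) := by
  by_cases hi : 1 ≤ i ∧ i ≤ n - 1
  · by_cases hj : 1 ≤ j ∧ j ≤ n - 1
    · have h := PresentedGroup.one_of_mem (rels := braidRels n)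
        (Or.inl ⟨⟨i - 1, by omega⟩, ⟨j - 1, by omega⟩,
          show i - 1 + 2 ≤ j - 1 by omega, rfl⟩)
      simp only [map_mul, map_inv] at h
      rw [mul_inv_eq_one, mul_inv_eq_iff_eq_mul] at h
      rw [braidGen_eq_of n i hi, braidGen_eq_of n j hj]
      exact h
    · rw [braidGen_eq_one n j hj]
      exact Commute.one_right _
  · rw [braidGen_eq_one n i hi]
    exact Commute.one_left _

/-- The braid group acts on strands: `σ_{i+1}` acts as the transposition `(i i+1)`. The strands are
taken in `ℕ` rather than in `Fin n` to avoid bounds in the indices. -/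
def braidPerm (n : ℕ) : BraidGroup n →* Equiv.Perm ℕ :=
  PresentedGroup.toGroup (rels := braidRels n)
    (f := fun i : Fin (n - 1) => Equiv.swap (i : ℕ) ((i : ℕ) + 1)) (by
      rintro r (⟨i, j, hij, rfl⟩ | ⟨i, j, hij, rfl⟩)
      · simp only [map_mul, map_inv, FreeGroup.lift_apply_of]
        rw [mul_inv_eq_one, mul_inv_eq_iff_eq_mul]
        refine (Equiv.Perm.Disjoint.commute ?_).eq
        intro x
        simp only [Equiv.swap_apply_def]
        grind
      · simp only [map_mul, map_inv, FreeGroup.lift_apply_of]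
        rw [mul_inv_eq_one, hij]
        ext x
        simp only [Equiv.Perm.mul_apply, Equiv.swap_apply_def]
        grind)

theorem braidPerm_letter (n k : ℕ) (hk : k < n - 1) :
    braidPerm n (braidGen n (k + 1) ^ ((-1 : ℤ) ^ k)) = Equiv.swap k (k + 1) := by
  have h : braidPerm n (braidGen n (k + 1)) = Equiv.swap k (k + 1) := by
    rw [braidGen_eq_of n (k + 1) (by omega)]
    exact PresentedGroup.toGroup.of _
  rw [map_zpow, h]
  rcases neg_one_pow_eq_or ℤ k with h1 | h1 <;> simp [h1]

theorem range_permutedAlpha (n : ℕ) :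
    (Set.range fun π : Equiv.Perm (Fin (n - 1)) => permutedAlpha n π) =
      letterProds (fun k => braidGen n (k + 1) ^ ((-1 : ℤ) ^ k)) (n - 1) := by
  ext x
  constructor
  · rintro ⟨π, rfl⟩
    refine ⟨List.ofFn fun k => (π k : ℕ), ?_, ?_⟩
    · have h := Equiv.Perm.ofFn_comp_perm π (fun k : Fin (n - 1) => (k : ℕ))
      have hr : (List.ofFn fun k : Fin (n - 1) => (k : ℕ)) = List.range (n - 1) := by
        apply List.ext_get <;> simp
      rwa [hr] at h
    · simp [permutedAlpha, List.map_ofFn, Function.comp_def]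
  · rintro ⟨L, hL, rfl⟩
    have hlen : L.length = n - 1 := by simpa using hL.length_eq
    have hnd : L.Nodup := hL.nodup_iff.2 List.nodup_range
    have hlt : ∀ a ∈ L, a < n - 1 := fun a ha => by simpa using hL.mem_iff.1 ha
    let f : Fin (n - 1) → Fin (n - 1) := fun k =>
      ⟨L.get (k.cast hlen.symm), hlt _ (List.get_mem _ _)⟩
    have hf : Function.Injective f := by
      intro a b hab
      have h := List.nodup_iff_injective_get.1 hnd (Fin.mk.inj_iff.1 hab)
      simpa [Fin.ext_iff] using h
    refine ⟨Equiv.ofBijective f (Finite.injective_iff_bijective.1 hf), ?_⟩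
    have hL' : L = List.ofFn fun k => (f k : ℕ) := by
      apply List.ext_get
      · simp [hlen]
      · intro k h1 h2
        simp [f]
    simp only [permutedAlpha, Equiv.ofBijective_apply]
    conv_rhs => rw [hL', List.map_ofFn]
    rfl

/-- the set of braids obtained by permuting the letters of the word of
`α_n` has exactly `2^(n-2)` elements. -/
theorem stmt_1 (n : ℕ) (hn : 2 ≤ n) :
    (Set.range fun π : Equiv.Perm (Fin (n - 1)) => permutedAlpha n π).ncard = 2 ^ (n - 2) := by
  rw [range_permutedAlpha]
  have h := letterProds_ncard (fun k => braidGen n (k + 1) ^ ((-1 : ℤ) ^ k))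
    (fun i j hij => ((braidGen_commute n (i + 1) (j + 1) (by omega)).zpow_zpow _ _))
    (braidPerm n) (n - 1) (braidPerm_letter n) (n - 2) (by omega)
  rwa [show n - 2 + 1 = n - 1 by omega] at h
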